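/- Let 0 ≤ r ≤ 8 and let β ∈ ℤ^{1+r} satisfy: p_a(β) = 2, β·l ≥ 1 for every line class l, β·C ≥ 1 for every conic class C, and β ≠ −2K in case r = 8. Then β + K is a conic class, i.e., (β+K)·(β+K) = 0 and (−K)·(β+K) = 2; in particular p_a(β+K) = 0 and (−K)·β = (−K)·(−K) + 2. -/

import Mathlib

/-!
Write `D = β + K`. Since `K·l = -1` for a line class `l`, the hypothesis on lines says that
`D·l ≥ 0` for every line class, and `p_a(β) = 2` says that `D² + (-K·D) = 2`.

For `r ≥ 2` a class that is nonnegative on all lines satisfies `D² ≥ 0` and `-K·D ≥ 0`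
(`nef_nonneg`). This is proved by descent on the degree `d`, which is nonnegative because
`d ≥ a_i + a_j ≥ 0`. The reflection in the root `h - e_i - e_j - e_k` is an isometry fixing `K`,
so it permutes the line classes and preserves `D²` and `K·D`; it lowers `d` as soon as
`d < a_i + a_j + a_k`. When no reflection lowers `d`, both inequalities follow
from `a_i + a_j + a_k ≤ d` for the three largest coefficients, because `r ≤ 9`.

Hence `(D², -K·D)` is `(0, 2)`, `(1, 1)` or `(2, 0)`. The Cauchy–Schwarz inequality
`(∑ a_i)² ≤ r ∑ a_i²`, which is the Hodge index inequality for this lattice, excludes `(2, 0)`, and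
it forces `r = 8`, `D = -K` in the case `(1, 1)`, that is `β = -2K`. What remains is `(0, 2)`: the
class `D` is a conic class. For `r ≤ 1` the genus equation is solved directly; the conic class
`h - e_1` is needed only there, since for `r ≥ 2` the lines suffice.
-/

/-- Intersection pairing on the Picard lattice of `S_r`, with classes written in
`(d; a_1, …, a_r)` coordinates (the class `d·h − ∑ a_i·e_i`):
`(d; a)·(d'; a') = d·d' − ∑ a_i·a_i'`. -/
def inter {r : ℕ} (x y : ℤ × (Fin r → ℤ)) : ℤ :=
  x.1 * y.1 - ∑ i, x.2 i * y.2 i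

/-- The canonical class `K = (−3; −1, …, −1)` of `S_r`. -/
def Kcl (r : ℕ) : ℤ × (Fin r → ℤ) := (-3, fun _ => -1)

/-- A line class: `l·l = −1` and `(−K)·l = 1`. -/
def IsLine {r : ℕ} (l : ℤ × (Fin r → ℤ)) : Prop :=
  inter l l = -1 ∧ inter (-(Kcl r)) l = 1

/-- A conic class: `C·C = 0` and `(−K)·C = 2`. -/
def IsConic {r : ℕ} (C : ℤ × (Fin r → ℤ)) : Prop :=
  inter C C = 0 ∧ inter (-(Kcl r)) C = 2

/-- Arithmetic genus `p_a(β) = β·(β+K)/2 + 1`. -/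
def pa {r : ℕ} (β : ℤ × (Fin r → ℤ)) : ℤ :=
  inter β (β + Kcl r) / 2 + 1

/-! ### The pairing, line classes and reflections -/

section Pairing

variable {r : ℕ}

lemma inter_comm' (x y : ℤ × (Fin r → ℤ)) : inter x y = inter y x := by
  simp [inter, mul_comm]

lemma inter_add_right (x y z : ℤ × (Fin r → ℤ)) : inter x (y + z) = inter x y + inter x z := by
  simp only [inter, Prod.fst_add, Prod.snd_add, Pi.add_apply, mul_add, Finset.sum_add_distrib]
  ring

lemma inter_smul_right (c : ℤ) (x y : ℤ × (Fin r → ℤ)) : inter x (c • y) = c * inter x y := by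
  simp only [inter, Prod.smul_fst, Prod.smul_snd, Pi.smul_apply, smul_eq_mul, mul_sub,
    Finset.mul_sum, mul_left_comm]

lemma inter_neg_right (x y : ℤ × (Fin r → ℤ)) : inter x (-y) = -inter x y := by
  simpa using inter_smul_right (-1) x y

lemma inter_sub_right (x y z : ℤ × (Fin r → ℤ)) : inter x (y - z) = inter x y - inter x z := by
  rw [sub_eq_add_neg, inter_add_right, inter_neg_right, sub_eq_add_neg]

lemma inter_add_left (x y z : ℤ × (Fin r → ℤ)) : inter (x + y) z = inter x z + inter y z := by
  rw [inter_comm', inter_add_right, inter_comm' z x, inter_comm' z y]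

lemma inter_smul_left (c : ℤ) (x y : ℤ × (Fin r → ℤ)) : inter (c • x) y = c * inter x y := by
  rw [inter_comm', inter_smul_right, inter_comm']

lemma inter_neg_left (x y : ℤ × (Fin r → ℤ)) : inter (-x) y = -inter x y := by
  rw [inter_comm', inter_neg_right, inter_comm']

/-- The class `h` of the pullback of a line in the plane. -/
def Hcl (r : ℕ) : ℤ × (Fin r → ℤ) := (1, 0)

/-- The exceptional class `e_i`. In the coordinates `(d; a_1, …, a_r)`, which stand for
`d·h - ∑ a_i·e_i`, its only nonzero entry is `a_i = -1`. -/
def Ecl (i : Fin r) : ℤ × (Fin r → ℤ) := (0, Pi.single i (-1))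

lemma inter_Hcl (x : ℤ × (Fin r → ℤ)) : inter x (Hcl r) = x.1 := by
  simp [inter, Hcl]

lemma inter_Ecl (x : ℤ × (Fin r → ℤ)) (i : Fin r) : inter x (Ecl i) = x.2 i := by
  simp [inter, Ecl, Pi.single_apply]

lemma isLine_Ecl (i : Fin r) : IsLine (Ecl i) := by
  constructor
  · rw [inter_Ecl]; simp [Ecl]
  · rw [inter_Ecl]; simp [Kcl]

lemma isLine_sub {i j : Fin r} (hij : i ≠ j) : IsLine (Hcl r - Ecl i - Ecl j) := by
  constructor <;>
  simp only [inter_sub_right, inter_Hcl, inter_Ecl] <;>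
  simp [Hcl, Ecl, Kcl, hij, hij.symm]

/-- The root `h - e_i - e_j - e_k`. -/
def root (i j k : Fin r) : ℤ × (Fin r → ℤ) := Hcl r - Ecl i - Ecl j - Ecl k

lemma inter_root (x : ℤ × (Fin r → ℤ)) (i j k : Fin r) :
    inter x (root i j k) = x.1 - x.2 i - x.2 j - x.2 k := by
  simp only [root, inter_sub_right, inter_Hcl, inter_Ecl]

lemma root_sq {i j k : Fin r} (hij : i ≠ j) (hik : i ≠ k) (hjk : j ≠ k) :
    inter (root i j k) (root i j k) = -2 := by
  rw [inter_root]
  simp [root, Hcl, Ecl, hij, hij.symm, hik, hik.symm, hjk, hjk.symm]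

lemma K_root (i j k : Fin r) : inter (Kcl r) (root i j k) = 0 := by
  rw [inter_root]
  simp [Kcl]

/-- The reflection `x ↦ x + (x·ρ) ρ` in a class `ρ`; it is an isometry when `ρ² = -2`. -/
def reflect (ρ x : ℤ × (Fin r → ℤ)) : ℤ × (Fin r → ℤ) := x + inter x ρ • ρ

/-- Reflections are self-adjoint. -/
lemma inter_reflect_left (ρ x y : ℤ × (Fin r → ℤ)) :
    inter (reflect ρ x) y = inter x (reflect ρ y) := by
  simp only [reflect, inter_add_left, inter_add_right, inter_smul_left, inter_smul_right]
  rw [inter_comm' ρ y]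
  ring

lemma inter_reflect_reflect {ρ : ℤ × (Fin r → ℤ)} (hρ : inter ρ ρ = -2) (x y : ℤ × (Fin r → ℤ)) :
    inter (reflect ρ x) (reflect ρ y) = inter x y := by
  simp only [reflect, inter_add_left, inter_add_right, inter_smul_left, inter_smul_right, hρ]
  rw [inter_comm' ρ y]
  ring

lemma inter_reflect_of_orthogonal {ρ z : ℤ × (Fin r → ℤ)} (hz : inter z ρ = 0)
    (x : ℤ × (Fin r → ℤ)) : inter z (reflect ρ x) = inter z x := by
  rw [reflect, inter_add_right, inter_smul_right, hz, mul_zero, add_zero]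

lemma IsLine.reflect {ρ l : ℤ × (Fin r → ℤ)} (hρ : inter ρ ρ = -2) (hK : inter (Kcl r) ρ = 0)
    (hl : IsLine l) : IsLine (reflect ρ l) := by
  refine ⟨by rw [inter_reflect_reflect hρ]; exact hl.1, ?_⟩
  rw [inter_reflect_of_orthogonal (by rw [inter_neg_left, hK, neg_zero])]
  exact hl.2

end Pairing

/-! ### Positivity of classes that are nonnegative on lines -/

lemma neg_K_inter {r : ℕ} (x : ℤ × (Fin r → ℤ)) :
    inter (-(Kcl r)) x = 3 * x.1 - ∑ i, x.2 i := by
  simp [inter, Kcl]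

lemma inter_self_eq {r : ℕ} (x : ℤ × (Fin r → ℤ)) :
    inter x x = x.1 ^ 2 - ∑ i, x.2 i ^ 2 := by
  simp [inter, sq]

/-- The inequalities satisfied by a class that no reflection in a root `h - e_i - e_j - e_k`
lowers. The three largest coefficients `p ≥ q ≥ s` have `p + q + s ≤ d`, and each of the at most
six others is at most `s`. -/
lemma reduced_bounds {r : ℕ} (h3 : 3 ≤ r) (hr : r ≤ 9) (d : ℤ) (a : Fin r → ℤ)
    (ha : ∀ i, 0 ≤ a i)
    (hd : ∀ i j k, i ≠ j → i ≠ k → j ≠ k → a i + a j + a k ≤ d) :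
    ∑ i, a i ≤ 3 * d ∧ ∑ i, a i ^ 2 ≤ d ^ 2 := by
  have c0 : (Finset.univ : Finset (Fin r)).card = r := by simp
  obtain ⟨i, hi, hmi⟩ := Finset.exists_max_image Finset.univ a
    (Finset.card_pos.mp (by omega))
  have c1 := Finset.card_erase_of_mem hi
  obtain ⟨j, hj, hmj⟩ := Finset.exists_max_image (Finset.univ.erase i) a
    (Finset.card_pos.mp (by omega))
  have c2 := Finset.card_erase_of_mem hj
  obtain ⟨k, hk, hmk⟩ := Finset.exists_max_image ((Finset.univ.erase i).erase j) a
    (Finset.card_pos.mp (by omega))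
  have c3 := Finset.card_erase_of_mem hk
  set T := ((Finset.univ.erase i).erase j).erase k with hT
  have hcard : (T.card : ℤ) ≤ 6 := by exact_mod_cast (show T.card ≤ 6 by omega)
  have hTk : ∀ l ∈ T, a l ≤ a k := fun l hl => hmk l (Finset.mem_of_mem_erase hl)
  have split : ∀ f : Fin r → ℤ, ∑ l, f l = f i + (f j + (f k + ∑ l ∈ T, f l)) := fun f => by
    rw [hT, Finset.add_sum_erase _ f hk, Finset.add_sum_erase _ f hj, Finset.add_sum_erase _ f hi]
  have s1 : ∑ l ∈ T, a l ≤ T.card * a k := by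
    simpa using Finset.sum_le_card_nsmul T a (a k) hTk
  have s2 : ∑ l ∈ T, a l ^ 2 ≤ T.card * a k ^ 2 := by
    simpa using Finset.sum_le_card_nsmul T (fun l => a l ^ 2) (a k ^ 2)
      (fun l hl => pow_le_pow_left₀ (ha l) (hTk l hl) 2)
  have hij := hmi j (Finset.mem_univ _)
  have hjk := hmj k (Finset.mem_of_mem_erase hk)
  have hsum := hd i j k (Finset.ne_of_mem_erase hj).symm
    (Finset.ne_of_mem_erase (Finset.mem_of_mem_erase hk)).symm (Finset.ne_of_mem_erase hk).symm
  have hak := ha k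
  have t1 : (T.card : ℤ) * a k ≤ 6 * a k := mul_le_mul_of_nonneg_right hcard hak
  have t2 : (T.card : ℤ) * a k ^ 2 ≤ 6 * a k ^ 2 :=
    mul_le_mul_of_nonneg_right hcard (sq_nonneg _)
  rw [split, split]
  refine ⟨by linarith, ?_⟩
  have hsq : (a i + a j + a k) ^ 2 ≤ d ^ 2 :=
    pow_le_pow_left₀ (by linarith [ha i, ha j]) hsum 2
  have e1 : a k * a k ≤ a j * a k := mul_le_mul_of_nonneg_right hjk hak
  have e2 : a k * a k ≤ a i * a k := mul_le_mul_of_nonneg_right (hjk.trans hij) hak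
  have e3 : a j * a k ≤ a i * a j := by
    rw [mul_comm (a i)]; exact mul_le_mul_of_nonneg_left (hjk.trans hij) (ha j)
  nlinarith

/-- A class that is nonnegative on all lines has nonnegative self-intersection and anticanonical
degree. For `r ≤ 1` there are too few lines for this to hold. -/
lemma nef_nonneg {r : ℕ} (h2 : 2 ≤ r) (hr : r ≤ 8) (n : ℕ) (D : ℤ × (Fin r → ℤ))
    (hn : D.1 ≤ n) (hD : ∀ l, IsLine l → 0 ≤ inter D l) :
    0 ≤ inter D D ∧ 0 ≤ inter (-(Kcl r)) D := by
  induction n using Nat.strong_induction_on generalizing D with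
  | _ n ih =>
  have ha : ∀ i, 0 ≤ D.2 i := fun i => by
    simpa only [inter_Ecl] using hD _ (isLine_Ecl i)
  have hb : ∀ i j, i ≠ j → D.2 i + D.2 j ≤ D.1 := fun i j hij => by
    have := hD _ (isLine_sub hij)
    simp only [inter_sub_right, inter_Hcl, inter_Ecl] at this
    linarith
  rcases Nat.lt_or_ge r 3 with h3 | h3
  · obtain rfl : r = 2 := by omega
    have h := hb 0 1 (by decide)
    have h0 := ha 0
    have h1 := ha 1
    rw [inter_self_eq, neg_K_inter, Fin.sum_univ_two, Fin.sum_univ_two]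
    constructor <;> nlinarith [mul_nonneg h0 h1]
  by_cases hred : ∀ i j k, i ≠ j → i ≠ k → j ≠ k → D.2 i + D.2 j + D.2 k ≤ D.1
  · obtain ⟨hs, hq⟩ := reduced_bounds h3 (by omega) D.1 D.2 ha hred
    rw [inter_self_eq, neg_K_inter]
    constructor <;> linarith
  · push Not at hred
    obtain ⟨i, j, k, hij, hik, hjk, hlt⟩ := hred
    have hρ := root_sq hij hik hjk
    have hK := K_root i j k
    have hD' : ∀ l, IsLine l → 0 ≤ inter (reflect (root i j k) D) l := fun l hl => by
      rw [inter_reflect_left]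
      exact hD _ (hl.reflect hρ hK)
    have hdeg : (reflect (root i j k) D).1 = D.1 + (D.1 - D.2 i - D.2 j - D.2 k) := by
      rw [reflect, inter_root]
      simp [root, Hcl, Ecl]
    have hnonneg : 0 ≤ (reflect (root i j k) D).1 := by
      have h1 := hD' _ (isLine_sub hij)
      have h2 := hD' _ (isLine_Ecl i)
      have h3 := hD' _ (isLine_Ecl j)
      simp only [inter_sub_right, inter_Hcl, inter_Ecl] at h1 h2 h3
      linarith
    have key := ih (reflect (root i j k) D).1.toNat (by omega) _ (Int.self_le_toNat _) hD'
    rwa [inter_reflect_reflect hρ,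
      inter_reflect_of_orthogonal (by rw [inter_neg_left, hK, neg_zero])] at key

/-! ### The genus equation -/

lemma cauchy {r : ℕ} (a : Fin r → ℤ) : (∑ i, a i) ^ 2 ≤ r * ∑ i, a i ^ 2 := by
  simpa using sq_sum_le_card_mul_sum_sq (s := Finset.univ) (f := a)

/-- The adjunction parity: `x·(x+K)` is even. -/
lemma even_inter_add_K {r : ℕ} (x : ℤ × (Fin r → ℤ)) : Even (inter x (x + Kcl r)) := by
  have h : inter x (x + Kcl r) = x.1 * (x.1 - 3) - ∑ i, x.2 i * (x.2 i - 1) := by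
    simp [inter, Kcl, sub_eq_add_neg]
  rw [h]
  refine Even.sub ?_ (Finset.even_sum _ fun i _ => Int.even_mul_pred_self _)
  have := Int.even_mul_pred_self x.1
  have e : x.1 * (x.1 - 3) = x.1 * (x.1 - 1) - 2 * x.1 := by ring
  rw [e]
  exact this.sub (even_two_mul _)

/-- The numerical core: `D = β + K` is a conic class, given the genus equation
`β·D = D² - K·D = 2`. -/
lemma adjoint_isConic {r : ℕ} (hr : r ≤ 8) (D : ℤ × (Fin r → ℤ))
    (hgen : inter D D + inter (-(Kcl r)) D = 2)
    (hD : ∀ l, IsLine l → 0 ≤ inter D l)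
    (hC : ∀ C, IsConic C → -1 ≤ inter D C)
    (h8 : r = 8 → D ≠ -(Kcl r)) : IsConic D := by
  rcases Nat.lt_or_ge r 2 with h2 | h2
  · rw [IsConic]
    rw [inter_self_eq, neg_K_inter] at *
    interval_cases r
    · -- the equation is `d (d + 3) = 2`, which has no integral solution
      simp only [Finset.univ_eq_empty, Finset.sum_empty] at *
      have h1 : D.1 ≤ 0 := by nlinarith
      have h2 : -4 < D.1 := by nlinarith
      generalize D.1 = d at *
      interval_cases d <;> omega
    · simp only [Fin.sum_univ_one] at *
      have ha := hD _ (isLine_Ecl 0)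
      have hc := hC (Hcl 1 - Ecl 0) (by
        constructor <;> simp only [inter_sub_right, inter_Hcl, inter_Ecl] <;>
          simp [Hcl, Ecl, Kcl])
      simp only [inter_sub_right, inter_Hcl, inter_Ecl] at ha hc
      generalize D.1 = d at *
      generalize D.2 0 = a at *
      -- with `m = d - a ≥ -1` the equation is `2 (m + 1) a + m (m + 3) = 2`, so `m = 0`, `a = 1`
      obtain ⟨m, rfl⟩ : ∃ m, d = a + m := ⟨d - a, by ring⟩
      have hm : m < 1 := by nlinarith
      have hm' : -1 ≤ m := by linarith
      interval_cases m
      · nlinarith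
      · obtain rfl : a = 1 := by nlinarith
        norm_num
  · obtain ⟨hq, ht⟩ := nef_nonneg h2 hr D.1.toNat D (Int.self_le_toNat _) hD
    have hcs := cauchy D.2
    have hS : 0 ≤ ∑ i, D.2 i ^ 2 := Finset.sum_nonneg fun i _ => sq_nonneg _
    have hr' : (r : ℤ) ≤ 8 := by exact_mod_cast hr
    have hcs8 : (∑ i, D.2 i) ^ 2 ≤ 8 * ∑ i, D.2 i ^ 2 :=
      hcs.trans (mul_le_mul_of_nonneg_right hr' hS)
    have hcases : inter (-(Kcl r)) D = 2 ∨ inter (-(Kcl r)) D = 1 ∨ inter (-(Kcl r)) D = 0 := by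
      omega
    rcases hcases with h | h | h
    · exact ⟨by linarith, h⟩
    · exfalso
      have hq1 : inter D D = 1 := by linarith
      rw [inter_self_eq] at hq1
      rw [neg_K_inter] at h
      have e1 : ∑ i, D.2 i = 3 * D.1 - 1 := by linarith
      have e2 : ∑ i, D.2 i ^ 2 = D.1 ^ 2 - 1 := by linarith
      -- Cauchy–Schwarz reads `(d - 3)² ≤ 0`
      have hd : D.1 = 3 := by
        rw [e1, e2] at hcs8
        have h0 : (D.1 - 3) ^ 2 = 0 := le_antisymm (by linarith) (sq_nonneg _)
        have := pow_eq_zero_iff (two_ne_zero) |>.mp h0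
        linarith
      rw [e1, e2, hd] at hcs
      have hr8 : r = 8 := by
        have : (8 : ℤ) ≤ r := by linarith
        omega
      subst hr8
      rw [hd] at e1 e2
      have hz : ∑ i, (D.2 i - 1) ^ 2 = 0 := by
        have : ∑ i, (D.2 i - 1) ^ 2 = ∑ i, D.2 i ^ 2 - 2 * ∑ i, D.2 i + 8 := by
          simp only [sub_sq, Finset.sum_add_distrib, Finset.sum_sub_distrib, Finset.mul_sum]
          simp
        rw [this, e1, e2]
        norm_num
      apply h8 rfl
      refine Prod.ext (by simp [Kcl, hd]) (funext fun i => ?_)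
      have := (Finset.sum_eq_zero_iff_of_nonneg fun i _ => sq_nonneg _).mp hz i (Finset.mem_univ i)
      have := pow_eq_zero_iff (two_ne_zero) |>.mp this
      simp only [Kcl, Prod.snd_neg, Pi.neg_apply]
      linarith
    · exfalso
      have hq2 : inter D D = 2 := by linarith
      rw [inter_self_eq] at hq2
      rw [neg_K_inter] at h
      have e1 : ∑ i, D.2 i = 3 * D.1 := by linarith
      have e2 : ∑ i, D.2 i ^ 2 = D.1 ^ 2 - 2 := by linarith
      rw [e1, e2] at hcs8
      nlinarith [sq_nonneg D.1]

/-- for a (numerically) very ample class `β` of arithmetic genus `2`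
(with `β ≠ −2K` when `r = 8`), the class `β + K` is a conic class; in particular
`p_a(β+K) = 0` and `(−K)·β = (−K)·(−K) + 2`. -/
theorem genus_two_very_ample_adjoint_is_conic (r : ℕ) (hr : r ≤ 8)
    (β : ℤ × (Fin r → ℤ)) (hpa : pa β = 2)
    (hline : ∀ l : ℤ × (Fin r → ℤ), IsLine l → 1 ≤ inter β l)
    (hconic : ∀ C : ℤ × (Fin r → ℤ), IsConic C → 1 ≤ inter β C)
    (h8 : r = 8 → β ≠ -(Kcl r + Kcl r)) :
    IsConic (β + Kcl r) ∧ pa (β + Kcl r) = 0 ∧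
      inter (-(Kcl r)) β = inter (-(Kcl r)) (-(Kcl r)) + 2 := by
  -- `p_a` is defined by integer division; parity shows that nothing is rounded off
  have hgen : inter β (β + Kcl r) = 2 := by
    obtain ⟨m, hm⟩ := even_inter_add_K β
    rw [pa] at hpa
    omega
  have key : IsConic (β + Kcl r) := by
    apply adjoint_isConic hr
    · rw [← inter_add_left]
      simpa using hgen
    · intro l hl
      have h1 := hline l hl
      have h2 := hl.2
      rw [inter_neg_left] at h2
      rw [inter_add_left]
      linarith
    · intro C hC
      have h1 := hconic C hC
      have h2 := hC.2
      rw [inter_neg_left] at h2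
      rw [inter_add_left]
      linarith
    · intro h h'
      apply h8 h
      rw [eq_sub_of_add_eq h']
      abel
  obtain ⟨k1, k2⟩ := key
  refine ⟨⟨k1, k2⟩, ?_, ?_⟩
  · rw [inter_neg_left, inter_comm'] at k2
    have : inter (β + Kcl r) (β + Kcl r + Kcl r) = -2 := by
      rw [inter_add_right, k1]
      linarith
    rw [pa, this]
    norm_num
  · rw [inter_add_right] at k2
    rw [inter_neg_right]
    linarith
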